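/- Let α ∈ Δ' and let X be a compact shift-invariant subset of Σ⁺ such that α ∈ DF_MZ(X). Then there exists s ∈ X with I(α) ≤ s in the lexicographic order (equivalently, the maximum of X is at least I(α)). -/

import Mathlib

open Filter Topology MeasureTheory

/-- The sequence space `Σ⁺ = {0,1,2}^ℕ` (with the product topology). -/
abbrev Seq3 := ℕ → Fin 3

/-- The shift map `σ`. -/
def shift (s : Seq3) : Seq3 := fun n => s (n + 1)

/-- The observable `κ(s) = e_{s₀}`. -/
noncomputable def kappa (s : Seq3) : Fin 3 → ℝ := fun i => if i = s 0 then 1 else 0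

/-- The cocycle `κ_σ(s,r) = Σ_{i<r} κ(σⁱ s)`. -/
noncomputable def birk (s : Seq3) (r : ℕ) : Fin 3 → ℝ :=
  ∑ i ∈ Finset.range r, kappa (shift^[i] s)

/-- The Birkhoff digit frequency of `s` exists and equals `v`. -/
def hasFreq (s : Seq3) (v : Fin 3 → ℝ) : Prop :=
  Tendsto (fun r : ℕ => (r : ℝ)⁻¹ • birk s r) atTop (nhds v)

/-- The lexicographic order on `Σ⁺`. -/
def lexLe (s t : Seq3) : Prop :=
  s = t ∨ ∃ n, (∀ i, i < n → s i = t i) ∧ s n < t n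

/-- The set `Max` of maximal sequences. -/
def MaxSet : Set Seq3 := {w | w 0 = 2 ∧ ∀ r : ℕ, lexLe (shift^[r] w) w}

/-- The symbolic β-shift `B(w)`. -/
def BetaShift (w : Seq3) : Set Seq3 := {s | ∀ r : ℕ, lexLe (shift^[r] s) w}

/-- The digit frequency set `DF(w)`. -/
def DF (w : Seq3) : Set (Fin 3 → ℝ) := {v | ∃ s ∈ BetaShift w, hasFreq s v}

/-- The Misiurewicz–Ziemian digit frequency set `DF_MZ(X)` of a subset `X ⊆ Σ⁺`. -/
def DFMZ (X : Set Seq3) : Set (Fin 3 → ℝ) :=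
  {v | ∃ (s : ℕ → Seq3) (r : ℕ → ℕ), (∀ i, s i ∈ X) ∧ Tendsto r atTop atTop ∧
    Tendsto (fun i => (r i : ℝ)⁻¹ • birk (s i) (r i)) atTop (nhds v)}

/-- The standard 2-simplex `Δ ⊆ ℝ³`. -/
def Delta : Set (Fin 3 → ℝ) := {α | (∀ i, 0 ≤ α i) ∧ α 0 + α 1 + α 2 = 1}

/-- `Δ' = {α ∈ Δ : α₂ > 0}`. -/
def Delta' : Set (Fin 3 → ℝ) := {α | α ∈ Delta ∧ 0 < α 2}

/-- `I` is the infimax sequence of `α`: the infimum, in the lexicographic order, of the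
(nonempty) set of maximal sequences with digit frequency `α`; it belongs to `Max`. -/
def IsInfimax (α : Fin 3 → ℝ) (I : Seq3) : Prop :=
  {w | w ∈ MaxSet ∧ hasFreq w α}.Nonempty ∧ I ∈ MaxSet ∧
    (∀ w, w ∈ MaxSet ∧ hasFreq w α → lexLe I w) ∧
    (∀ b : Seq3, (∀ w, w ∈ MaxSet ∧ hasFreq w α → lexLe b w) → lexLe b I)

/-- The closure of the forward `σ`-orbit of `s` (e.g. `C_α` is `orbitClosure I(α)`). -/
def orbitClosure (s : Seq3) : Set Seq3 := closure {t | ∃ r : ℕ, shift^[r] s = t}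

/-- A vector in `ℝ³` is rational if all its coordinates are. -/
def IsRat (v : Fin 3 → ℝ) : Prop := ∀ i, ∃ q : ℚ, v i = (q : ℝ)

/-- A minimal set of a continuous map: a nonempty compact invariant set in which every
point has dense forward orbit. -/
def IsMinimalSet {X : Type*} [TopologicalSpace X] (f : X → X) (C : Set X) : Prop :=
  C.Nonempty ∧ IsCompact C ∧ Set.MapsTo f C C ∧
    ∀ x ∈ C, C ⊆ closure {y | ∃ n : ℕ, f^[n] x = y}

/-- Greedy bounded discrepancy. -/
theorem greedy_aux {B : Type*} [Fintype B] [DecidableEq B] [Nonempty B] (f : B → ℝ)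
    (hf1 : ∑ b, f b = 1) (hf0 : ∀ b, 0 ≤ f b) :
    ∃ x : ℕ → B, ∀ k b,
      |∑ i ∈ Finset.range k, (f b - if x i = b then 1 else 0)| ≤ (Fintype.card B : ℝ) := by
  have hpick : ∀ d : B → ℝ, ∃ p : B, ∀ b, d b + f b ≤ d p + f p := fun d =>
    Finite.exists_max (fun b => d b + f b)
  choose pick hp using hpick
  let d : ℕ → B → ℝ := fun k => Nat.rec (fun _ => 0)
    (fun _ d => fun b => d b + f b - if pick d = b then 1 else 0) k
  have hd0 : ∀ b, d 0 b = 0 := fun b => rfl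
  have hds : ∀ k b, d (k+1) b = d k b + f b - if pick (d k) = b then 1 else 0 :=
    fun k b => rfl
  have hsum : ∀ k, ∑ b, d k b = 0 := by
    intro k
    induction k with
    | zero => simp [hd0]
    | succ k ih =>
      simp only [hds, Finset.sum_sub_distrib, Finset.sum_add_distrib, ih, hf1]
      simp
  have hlow : ∀ k b, -1 ≤ d k b := by
    intro k
    induction k with
    | zero => intro b; simp [hd0]
    | succ k ih =>
      intro b
      rw [hds]
      split_ifs with h
      · have h1 : 0 < d k b + f b := by
          by_contra hcon
          push Not at hcon
          have : ∑ b, (d k b + f b) ≤ ∑ b : B, (0:ℝ) :=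
            Finset.sum_le_sum (fun b' _ => le_trans (hp (d k) b') (by rw [h]; exact hcon))
          rw [Finset.sum_add_distrib, hsum, hf1] at this
          simp at this
          linarith
        linarith
      · have := ih b
        have := hf0 b
        linarith
  have hup : ∀ k b, d k b ≤ (Fintype.card B : ℝ) := by
    intro k b
    have h2 : d k b + 1 ≤ ∑ b, (d k b + 1) :=
      Finset.single_le_sum (f := fun b => d k b + 1)
        (fun b' _ => by have := hlow k b'; linarith) (Finset.mem_univ b)
    rw [Finset.sum_add_distrib, hsum] at h2
    simp at h2
    linarith
  refine ⟨fun k => pick (d k), fun k b => ?_⟩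
  have : ∑ i ∈ Finset.range k, (f b - if pick (d i) = b then (1:ℝ) else 0) = d k b := by
    induction k with
    | zero => simp [hd0]
    | succ k ih => rw [Finset.sum_range_succ, ih, hds]; ring
  rw [this, abs_le]
  have hc : (1:ℝ) ≤ Fintype.card B := by exact_mod_cast Fintype.card_pos
  exact ⟨by have := hlow k b; linarith, hup k b⟩

/-- Existence of the block sequence. -/
theorem blockseq_aux {B E : Type*} [Fintype B] [DecidableEq B] [NormedAddCommGroup E]
    [NormedSpace ℝ E] (P : B) (g : B → E) (f : B → ℝ)
    (hf1 : ∑ b, f b = 1) (hf0 : ∀ b, 0 ≤ f b) (hfg : ∑ b, f b • g b = 0) :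
    ∃ x : ℕ → B, x 0 = P ∧ (∃ C : ℝ, ∀ k, ‖∑ i ∈ Finset.range k, g (x i)‖ ≤ C) ∧
      ((∀ i, x i = P) ∨ ∃ K, (∀ i < K, x i = P) ∧ ∀ k, 0 < k → ∃ i < K, x (k + i) ≠ P) := by
  have : Nonempty B := ⟨P⟩
  by_cases hP : f P = 1
  · have hz : ∀ b, b ≠ P → f b = 0 := by
      intro b hb
      have h1 := Finset.add_sum_erase Finset.univ f (Finset.mem_univ P)
      rw [hf1, hP] at h1
      have h2 : ∑ x ∈ Finset.univ.erase P, f x = 0 := by linarith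
      rw [Finset.sum_eq_zero_iff_of_nonneg (fun b _ => hf0 b)] at h2
      exact h2 b (by simp [hb])
    have hgP : g P = 0 := by
      rw [Finset.sum_eq_single P] at hfg
      · simpa [hP] using hfg
      · intro b _ hb; simp [hz b hb]
      · simp
    exact ⟨fun _ => P, rfl, ⟨0, fun k => by simp [hgP]⟩, Or.inl fun _ => rfl⟩
  · have hPle : f P ≤ 1 := by
      rw [← hf1]; exact Finset.single_le_sum (fun b _ => hf0 b) (Finset.mem_univ P)
    have hPlt : f P < 1 := lt_of_le_of_ne hPle hP
    obtain ⟨Q, hQ⟩ : ∃ Q, Q ≠ P := by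
      by_contra hcon
      push Not at hcon
      rw [Finset.sum_eq_single P] at hf1
      · exact hP hf1
      · intro b _ hb; exact absurd (hcon b) hb
      · simp
    obtain ⟨x, hx⟩ := greedy_aux f hf1 hf0
    set c : ℝ := (Fintype.card B : ℝ) with hc
    obtain ⟨K, hK⟩ := exists_nat_gt (2 * c / (1 - f P))
    have hK' : 2 * c < K * (1 - f P) := by
      rwa [div_lt_iff₀ (by linarith)] at hK
    have hc0 : 0 < c := by rw [hc]; exact_mod_cast Fintype.card_pos
    have hK0 : 0 < K := by
      rcases Nat.eq_zero_or_pos K with h | h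
      · subst h; simp at hK'; linarith
      · exact h
    have hwin : ∀ k, ∃ i < K, x (k + i) ≠ P := by
      intro k
      by_contra hcon
      push Not at hcon
      have h1 := hx (k + K) P
      have h2 := hx k P
      rw [Finset.sum_range_add] at h1
      have h3 : ∑ i ∈ Finset.range K, (f P - if x (k + i) = P then (1:ℝ) else 0)
          = K * (f P - 1) := by
        rw [Finset.sum_congr rfl (g := fun _ => f P - 1)]
        · simp; ring
        · intro i hi
          rw [if_pos (hcon i (Finset.mem_range.1 hi))]
      rw [h3] at h1
      rw [abs_le] at h1 h2
      nlinarith [h1.1, h2.2]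
    have hbd : ∀ k, ‖∑ i ∈ Finset.range k, g (x i)‖ ≤ ∑ b, c * ‖g b‖ := by
      intro k
      have h1 : ∑ i ∈ Finset.range k, g (x i) =
          -∑ b, (∑ i ∈ Finset.range k, (f b - if x i = b then (1:ℝ) else 0)) • g b := by
        simp only [Finset.sum_smul, sub_smul]
        rw [Finset.sum_comm]
        simp only [Finset.sum_sub_distrib, hfg]
        simp
      rw [h1, norm_neg]
      refine (norm_sum_le _ _).trans (Finset.sum_le_sum fun b _ => ?_)
      rw [norm_smul, Real.norm_eq_abs]
      exact mul_le_mul_of_nonneg_right (hx k b) (norm_nonneg _)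
    have hG : ∀ b, ‖g b‖ ≤ ∑ b, ‖g b‖ := fun b =>
      Finset.single_le_sum (fun b _ => norm_nonneg (g b)) (Finset.mem_univ b)
    have hG0 : 0 ≤ ∑ b, ‖g b‖ := Finset.sum_nonneg fun b _ => norm_nonneg _
    have hS0 : 0 ≤ ∑ b, c * ‖g b‖ := Finset.sum_nonneg fun b _ => by positivity
    let x' : ℕ → B := fun i => if i < K then P else if i = K then Q else x (i - (K + 1))
    have hshort : ∀ k ≤ K + 1, ‖∑ i ∈ Finset.range k, g (x' i)‖ ≤ (K + 1) * ∑ b, ‖g b‖ := by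
      intro k hk
      refine (norm_sum_le _ _).trans ?_
      refine (Finset.sum_le_sum fun i _ => hG (x' i)).trans ?_
      rw [Finset.sum_const, Finset.card_range, nsmul_eq_mul]
      exact mul_le_mul_of_nonneg_right (by exact_mod_cast hk) hG0
    refine ⟨x', by simp [x', hK0], ⟨(K + 1) * ∑ b, ‖g b‖ + ∑ b, c * ‖g b‖, fun k => ?_⟩,
      Or.inr ⟨K, fun i hi => by simp [x', hi], fun k hk => ?_⟩⟩
    · rcases le_total k (K + 1) with h | h
      · have := hshort k h
        linarith
      · obtain ⟨t, rfl⟩ := Nat.exists_eq_add_of_le h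
        rw [Finset.sum_range_add]
        refine (norm_add_le _ _).trans (add_le_add (hshort _ le_rfl) ?_)
        have : ∀ i, x' (K + 1 + i) = x i := by
          intro i
          simp only [x']
          rw [if_neg (by omega), if_neg (by omega)]
          congr 1; omega
        simp only [this]
        exact hbd t
    · rcases Nat.lt_or_ge K k with h | h
      · obtain ⟨i, hi, hne⟩ := hwin (k - (K + 1))
        refine ⟨i, hi, ?_⟩
        simp only [x']
        rw [if_neg (by omega), if_neg (by omega)]
        convert hne using 2; omega
      · refine ⟨K - k, by omega, ?_⟩
        simp only [x']
        rw [if_neg (by omega), if_pos (by omega)]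
        exact hQ

/-- letter at position `i` of a block `(j,a)`. -/
def blkLetter (I : Seq3) (j : ℕ) (a : Fin 3) (i : ℕ) : Fin 3 := if i < j then I i else a

/-- state machine for concatenation; `J k` is length minus one of block `k`. -/
def concSt (J : ℕ → ℕ) : ℕ → ℕ × ℕ
  | 0 => (0, 0)
  | m + 1 => if (concSt J m).2 < J (concSt J m).1 then ((concSt J m).1, (concSt J m).2 + 1)
      else ((concSt J m).1 + 1, 0)

/-- the concatenation. -/
def conc (I : Seq3) (J : ℕ → ℕ) (A : ℕ → Fin 3) : Seq3 := fun m =>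
  blkLetter I (J (concSt J m).1) (A (concSt J m).1) (concSt J m).2

theorem concSt_le (J : ℕ → ℕ) (m : ℕ) : (concSt J m).2 ≤ J (concSt J m).1 := by
  induction m with
  | zero => simp [concSt]
  | succ m ih =>
    rw [concSt]; split_ifs with h
    · exact h
    · simp

theorem concSt_add (J : ℕ → ℕ) (m k i t : ℕ) (h : concSt J m = (k, i)) (ht : i + t ≤ J k) :
    concSt J (m + t) = (k, i + t) := by
  induction t with
  | zero => simpa using h
  | succ t ih =>
    rw [← add_assoc, concSt, ih (by omega)]
    simp only
    rw [if_pos (by omega)]; rfl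

theorem concSt_next (J : ℕ → ℕ) (m k : ℕ) (h : concSt J m = (k, 0)) :
    concSt J (m + (J k + 1)) = (k + 1, 0) := by
  rw [← add_assoc, concSt, concSt_add J m k 0 (J k) h (by omega)]
  simp

theorem conc_sum {E : Type*} [AddCommGroup E] (h : Fin 3 → E) (I : Seq3) (J : ℕ → ℕ)
    (A : ℕ → Fin 3) (m : ℕ) :
    ∑ i ∈ Finset.range m, h (conc I J A i) =
      ∑ k ∈ Finset.range (concSt J m).1, (∑ i ∈ Finset.range (J k), h (I i) + h (A k)) +
      ∑ i ∈ Finset.range (concSt J m).2, h (I i) := by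
  induction m with
  | zero => simp [concSt]
  | succ m ih =>
    have hle := concSt_le J m
    rw [Finset.sum_range_succ, ih, concSt, conc, blkLetter]
    split_ifs with hlt
    · simp only
      rw [Finset.sum_range_succ _ (concSt J m).2, add_assoc]
    · have : (concSt J m).2 = J (concSt J m).1 := by omega
      simp only
      rw [Finset.sum_range_succ _ (concSt J m).1, this]
      simp [add_assoc]

theorem shift_iter (s : Seq3) (r i : ℕ) : (shift^[r] s) i = s (r + i) := by
  induction r generalizing i with
  | zero => simp
  | succ r ih =>
    rw [Function.iterate_succ_apply', shift, ih]; congr 1; omega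

theorem not_lexLe {s t : Seq3} (h : ¬ lexLe s t) : ∃ n, (∀ i < n, t i = s i) ∧ t n < s n := by
  classical
  have hne : ∃ n, s n ≠ t n := by
    by_contra hcon
    push Not at hcon
    exact h (Or.inl (funext hcon))
  have h1 := Nat.find_spec hne
  have h2 : ∀ i < Nat.find hne, s i = t i := fun i hi => by
    have := Nat.find_min hne hi
    push Not at this
    exact this
  refine ⟨Nat.find hne, fun i hi => (h2 i hi).symm, ?_⟩
  rcases lt_trichotomy (s (Nat.find hne)) (t (Nat.find hne)) with h3 | h3 | h3
  · exact absurd (Or.inr ⟨_, h2, h3⟩) h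
  · exact absurd h3 h1
  · exact h3

theorem lt_not_lexLe {s t : Seq3} {n : ℕ} (h : ∀ i < n, t i = s i) (hn : t n < s n) :
    ¬ lexLe s t := by
  rintro (rfl | ⟨m, hm, hlt⟩)
  · exact lt_irrefl _ hn
  · rcases lt_trichotomy m n with h1 | h1 | h1
    · rw [h m h1] at hlt; exact lt_irrefl _ hlt
    · subst h1; exact lt_asymm hn hlt
    · rw [hm n h1] at hn; exact lt_irrefl _ hn

theorem compact_aux (I : Seq3) (X : Set Seq3) (hXc : IsCompact X) (hne : X.Nonempty)
    (hX : ∀ s ∈ X, ∃ n, (∀ i < n, s i = I i) ∧ s n < I n) :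
    ∃ n, 0 < I n ∧ ∀ s ∈ X, ∃ j ≤ n, (∀ i < j, s i = I i) ∧ s j < I j := by
  let V : ℕ → Set Seq3 := fun j => {s | (∀ i < j, s i = I i) ∧ s j < I j}
  have hV : ∀ j, IsOpen (V j) := by
    intro j
    have : V j = (⋂ i ∈ Finset.range j, (fun s : Seq3 => s i) ⁻¹' {I i}) ∩
        (fun s : Seq3 => s j) ⁻¹' (Set.Iio (I j)) := by
      ext s; simp [V]
    rw [this]
    exact (isOpen_biInter_finset fun i _ =>
      (isOpen_discrete _).preimage (continuous_apply i)).inter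
      ((isOpen_discrete _).preimage (continuous_apply j))
  obtain ⟨F, hF⟩ := hXc.elim_finite_subcover V hV (fun s hs => by
    obtain ⟨n, hn⟩ := hX s hs
    exact Set.mem_iUnion.2 ⟨n, hn⟩)
  let T : Set ℕ := {m | ∃ s ∈ X, s ∈ V m}
  have hTF : T ⊆ F := by
    rintro m ⟨s, hs, hm⟩
    have := hF hs
    simp only [Set.mem_iUnion] at this
    obtain ⟨j, hj, hsj⟩ := this
    have : m = j := by
      rcases lt_trichotomy m j with h | h | h
      · have h1 := hm.2; rw [hsj.1 m h] at h1; exact absurd h1 (lt_irrefl _)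
      · exact h
      · have h1 := hsj.2; rw [hm.1 j h] at h1; exact absurd h1 (lt_irrefl _)
    rw [this]; exact hj
  have hTb : BddAbove T := (F.finite_toSet.subset hTF).bddAbove
  have hTn : T.Nonempty := by
    obtain ⟨s, hs⟩ := hne
    obtain ⟨n, hn⟩ := hX s hs
    exact ⟨n, s, hs, hn⟩
  refine ⟨sSup T, ?_, fun s hs => ?_⟩
  · obtain ⟨s, hs, hm⟩ := Nat.sSup_mem hTn hTb
    exact lt_of_le_of_lt (Fin.zero_le _) hm.2
  · obtain ⟨j, hj⟩ := hX s hs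
    exact ⟨j, le_csSup hTb ⟨s, hs, hj⟩, hj⟩

theorem birk_eq (s : Seq3) (r : ℕ) (α : Fin 3 → ℝ) :
    ∑ i ∈ Finset.range r, (fun d => (if d = s i then (1:ℝ) else 0) - α d) =
      birk s r - (r:ℝ) • α := by
  ext d
  simp [birk, kappa, shift_iter, Finset.sum_apply]

/-- The type of blocks. -/
abbrev Blk (I : Seq3) (n : ℕ) := {p : Fin (n + 1) × Fin 3 // p.2 < I p.1}

/-- The weight of a letter. -/
noncomputable def wt (α : Fin 3 → ℝ) (a : Fin 3) : Fin 3 → ℝ :=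
  fun d => (if d = a then (1:ℝ) else 0) - α d

/-- The weight of a block. -/
noncomputable def gw (α : Fin 3 → ℝ) (I : Seq3) (n : ℕ) (b : Blk I n) : Fin 3 → ℝ :=
  ∑ i ∈ Finset.range b.1.1, wt α (I i) + wt α b.1.2

theorem wt_sum (s : Seq3) (r : ℕ) (α : Fin 3 → ℝ) :
    ∑ i ∈ Finset.range r, wt α (s i) = birk s r - (r:ℝ) • α := birk_eq s r α

theorem wt_bound (α : Fin 3 → ℝ) : ∃ H : ℝ, 0 ≤ H ∧ ∀ a, ‖wt α a‖ ≤ H :=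
  ⟨∑ a, ‖wt α a‖, Finset.sum_nonneg fun _ _ => norm_nonneg _, fun a =>
    Finset.single_le_sum (f := fun a => ‖wt α a‖) (fun _ _ => norm_nonneg _) (Finset.mem_univ a)⟩

theorem wt_sum_bound (α : Fin 3 → ℝ) (H : ℝ) (hH : ∀ a, ‖wt α a‖ ≤ H) (s : Seq3) (r : ℕ) :
    ‖∑ i ∈ Finset.range r, wt α (s i)‖ ≤ r * H := by
  refine (norm_sum_le _ _).trans ((Finset.sum_le_sum fun i _ => hH (s i)).trans ?_)
  simp

theorem decomp_aux (α : Fin 3 → ℝ) (I : Seq3) (n : ℕ) (X : Set Seq3)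
    (hXinv : Set.MapsTo shift X X) (H : ℝ) (hH0 : 0 ≤ H) (hH : ∀ a, ‖wt α a‖ ≤ H)
    (hX : ∀ s ∈ X, ∃ j ≤ n, (∀ i < j, s i = I i) ∧ s j < I j) (r : ℕ) :
    ∀ s ∈ X, ∃ c : Blk I n → ℝ, (∀ b, 0 ≤ c b) ∧ (r:ℝ) ≤ (n + 1) * ∑ b, c b ∧
      ‖∑ i ∈ Finset.range r, wt α (s i) - ∑ b, c b • gw α I n b‖ ≤ 2 * (n + 1) * H := by
  induction r using Nat.strong_induction_on with
  | _ r ih =>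
    intro s hs
    obtain ⟨j, hj, hpre, hlt⟩ := hX s hs
    let b : Blk I n := ⟨(⟨j, by omega⟩, s j), hlt⟩
    have hg : gw α I n b = ∑ i ∈ Finset.range (j + 1), wt α (s i) := by
      rw [Finset.sum_range_succ, gw]
      congr 1
      exact Finset.sum_congr rfl fun i hi => by rw [hpre i (Finset.mem_range.1 hi)]
    have hjn : ((j:ℝ)) + 1 ≤ n + 1 := by exact_mod_cast Nat.succ_le_succ hj
    rcases le_total r (j + 1) with hr | hr
    · refine ⟨Pi.single b 1, fun b' => ?_, ?_, ?_⟩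
      · by_cases h : b' = b
        · subst h; simp
        · simp [h]
      · rw [Finset.sum_pi_single']
        simp
        have : (r:ℝ) ≤ j + 1 := by exact_mod_cast hr
        linarith
      · have h1 : ∑ b', (Pi.single b (1:ℝ) : Blk I n → ℝ) b' • gw α I n b' = gw α I n b := by
          rw [Finset.sum_eq_single b]
          · simp
          · intro b' _ h; simp [h]
          · simp
        rw [h1, hg]
        refine (norm_sub_le _ _).trans ?_
        have h2 := wt_sum_bound α H hH s r
        have h3 := wt_sum_bound α H hH s (j + 1)
        have h4 : (r:ℝ) * H ≤ (n + 1) * H := by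
          apply mul_le_mul_of_nonneg_right _ hH0
          exact_mod_cast hr.trans (Nat.succ_le_succ hj)
        have h5 : ((j + 1 : ℕ):ℝ) * H ≤ (n + 1) * H := by
          apply mul_le_mul_of_nonneg_right _ hH0
          exact_mod_cast (Nat.succ_le_succ hj)
        linarith
    · obtain ⟨t, rfl⟩ := Nat.exists_eq_add_of_le hr
      have hs' : shift^[j + 1] s ∈ X := hXinv.iterate (j + 1) hs
      obtain ⟨c, hc0, hcr, hcn⟩ := ih t (by omega) _ hs'
      refine ⟨fun b' => c b' + (Pi.single b (1:ℝ) : Blk I n → ℝ) b', fun b' => ?_, ?_, ?_⟩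
      · by_cases h : b' = b
        · have := hc0 b'; simp [h] at this ⊢; linarith
        · simp [h, hc0]
      · rw [Finset.sum_add_distrib, Finset.sum_pi_single']
        simp
        linarith
      · have h1 : ∑ b', (Pi.single b (1:ℝ) : Blk I n → ℝ) b' • gw α I n b' = gw α I n b := by
          rw [Finset.sum_eq_single b]
          · simp
          · intro b' _ h; simp [h]
          · simp
        simp only [add_smul]
        rw [Finset.sum_add_distrib, h1, hg, Finset.sum_range_add]
        simp only [shift_iter] at hcn
        convert hcn using 2
        abel

theorem hull_aux (α : Fin 3 → ℝ) (I : Seq3) (n : ℕ) (X : Set Seq3)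
    (hXinv : Set.MapsTo shift X X)
    (hX : ∀ s ∈ X, ∃ j ≤ n, (∀ i < j, s i = I i) ∧ s j < I j)
    (hαX : α ∈ DFMZ X) :
    ∃ f : Blk I n → ℝ, ∑ b, f b = 1 ∧ (∀ b, 0 ≤ f b) ∧ ∑ b, f b • gw α I n b = 0 := by
  obtain ⟨s, r, hs, hr, hlim⟩ := hαX
  obtain ⟨H, hH0, hH⟩ := wt_bound α
  have hcl : (0 : Fin 3 → ℝ) ∈ convexHull ℝ (Set.range (gw α I n)) := by
    have hclosed : IsClosed (convexHull ℝ (Set.range (gw α I n))) :=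
      ((Set.finite_range _).isCompact_convexHull ℝ).isClosed
    rw [← hclosed.closure_eq, Metric.mem_closure_iff]
    intro ε hε
    have hn0 : (0:ℝ) < n + 1 := by positivity
    have h1 : ∀ᶠ i in atTop, ‖(r i : ℝ)⁻¹ • birk (s i) (r i) - α‖ < ε / (2 * (n + 1)) := by
      have := Metric.tendsto_nhds.1 hlim (ε / (2 * (n + 1))) (by positivity)
      simpa [dist_eq_norm] using this
    have hrr : Tendsto (fun i => (r i : ℝ)) atTop atTop :=
      tendsto_natCast_atTop_atTop.comp hr
    have h2 := hrr.eventually_gt_atTop (max 0 (4 * (n + 1) ^ 2 * H / ε))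
    obtain ⟨i, hi1, hi2⟩ := (h1.and h2).exists
    obtain ⟨hi0, hi2⟩ := max_lt_iff.1 hi2
    obtain ⟨c, hc0, hcr, hcn⟩ := decomp_aux α I n X hXinv H hH0 hH hX (r i) (s i) (hs i)
    set C := ∑ b, c b with hC
    have hCpos : 0 < C := by
      by_contra hcon
      push Not at hcon
      nlinarith
    refine ⟨∑ b, (c b / C) • gw α I n b, ?_, ?_⟩
    · apply (convex_convexHull ℝ _).sum_mem
      · intro b _; exact div_nonneg (hc0 b) hCpos.le
      · rw [← Finset.sum_div, ← hC, div_self hCpos.ne']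
      · intro b _; exact subset_convexHull ℝ _ ⟨b, rfl⟩
    · rw [dist_zero_left]
      have h3 : ∑ b, (c b / C) • gw α I n b = C⁻¹ • ∑ b, c b • gw α I n b := by
        rw [Finset.smul_sum]
        exact Finset.sum_congr rfl fun b _ => by rw [smul_smul, div_eq_inv_mul]
      rw [h3, norm_smul, norm_inv, Real.norm_of_nonneg hCpos.le, inv_mul_lt_iff₀ hCpos]
      have h4 : ‖birk (s i) (r i) - (r i : ℝ) • α‖ < r i * (ε / (2 * (n + 1))) := by
        have : birk (s i) (r i) - (r i : ℝ) • α =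
            (r i : ℝ) • ((r i : ℝ)⁻¹ • birk (s i) (r i) - α) := by
          rw [smul_sub, smul_smul, mul_inv_cancel₀ hi0.ne', one_smul]
        rw [this, norm_smul, Real.norm_of_nonneg hi0.le]
        exact mul_lt_mul_of_pos_left hi1 hi0
      rw [wt_sum] at hcn
      have h5 : ‖∑ b, c b • gw α I n b‖ ≤
          ‖birk (s i) (r i) - (r i : ℝ) • α‖ + 2 * (n + 1) * H := by
        have := norm_sub_le (birk (s i) (r i) - (r i : ℝ) • α)
          (birk (s i) (r i) - (r i : ℝ) • α - ∑ b, c b • gw α I n b)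
        rw [sub_sub_cancel] at this
        linarith
      have h6 : 2 * (n + 1) * H ≤ r i * (ε / (2 * (n + 1))) := by
        rw [div_lt_iff₀ hε] at hi2
        rw [← mul_div_assoc, le_div_iff₀ (by positivity)]
        nlinarith
      have h7 : r i * (ε / (2 * (n + 1))) ≤ C * ε / 2 := by
        rw [← mul_div_assoc, div_le_div_iff₀ (by positivity) (by positivity)]
        nlinarith
      linarith
  rw [convexHull_range_eq_exists_affineCombination] at hcl
  obtain ⟨S, w, hw0, hw1, hw⟩ := hcl
  rw [Finset.affineCombination_eq_linear_combination _ _ _ hw1] at hw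
  classical
  refine ⟨fun b => if b ∈ S then w b else 0, ?_, fun b => ?_, ?_⟩
  · simpa using hw1
  · dsimp only; split_ifs with h
    · exact hw0 b h
    · exact le_rfl
  · simpa [ite_smul] using hw

theorem freq_aux (α : Fin 3 → ℝ) (v : Seq3) (C : ℝ)
    (hC : ∀ r, ‖∑ i ∈ Finset.range r, wt α (v i)‖ ≤ C) : hasFreq v α := by
  unfold hasFreq
  rw [tendsto_iff_norm_sub_tendsto_zero]
  have h0 : Tendsto (fun r : ℕ => C / (r : ℝ)) atTop (nhds 0) :=
    tendsto_const_div_atTop_nhds_zero_nat C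
  refine squeeze_zero' (Eventually.of_forall fun _ => norm_nonneg _) ?_ h0
  filter_upwards [eventually_gt_atTop 0] with r hr
  have hr' : (0:ℝ) < r := by exact_mod_cast hr
  have h1 := hC r
  rw [wt_sum] at h1
  have : (r : ℝ)⁻¹ • birk v r - α = (r : ℝ)⁻¹ • (birk v r - (r:ℝ) • α) := by
    rw [smul_sub, smul_smul, inv_mul_cancel₀ hr'.ne', one_smul]
  rw [this, norm_smul, norm_inv, Real.norm_of_nonneg hr'.le, div_eq_inv_mul]
  exact mul_le_mul_of_nonneg_left h1 (by positivity)

theorem conc_max (I : Seq3) (hI : I ∈ MaxSet) (n : ℕ) (hn : 0 < n) (P : Blk I n)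
    (hPn : (P.1.1 : ℕ) = n) (hPc : ∀ a, a < I n → a ≤ P.1.2) (x : ℕ → Blk I n) (hx0 : x 0 = P)
    (hx : (∀ i, x i = P) ∨ ∃ K, (∀ i < K, x i = P) ∧ ∀ k, 0 < k → ∃ i < K, x (k + i) ≠ P) :
    conc I (fun k => (x k).1.1) (fun k => (x k).1.2) ∈ MaxSet ∧
    ¬ lexLe I (conc I (fun k => (x k).1.1) (fun k => (x k).1.2)) := by
  set J : ℕ → ℕ := fun k => ((x k).1.1 : ℕ) with hJ
  set A : ℕ → Fin 3 := fun k => (x k).1.2 with hA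
  set v := conc I J A with hv
  have hJle : ∀ k, J k ≤ n := fun k => Nat.lt_succ_iff.1 (x k).1.1.2
  have hAlt : ∀ k, A k < I (J k) := fun k => (x k).2
  have hval : ∀ m k i t, concSt J m = (k, i) → i + t ≤ J k →
      v (m + t) = blkLetter I (J k) (A k) (i + t) := by
    intro m k i t h ht
    rw [hv, conc, concSt_add J m k i t h ht]
  have hst0 : concSt J 0 = (0, 0) := rfl
  have hJ0 : J 0 = n := by simp only [hJ, hx0]; exact hPn
  have hvlt : ∀ t < n, v t = I t := by
    intro t ht
    have := hval 0 0 0 t hst0 (by omega)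
    rw [zero_add] at this
    rw [this, blkLetter, if_pos (by omega)]
  have hvn : v n = P.1.2 := by
    have := hval 0 0 0 n hst0 (by omega)
    rw [zero_add] at this
    rw [this, blkLetter, if_neg (by omega)]
    simp only [hA, hx0]
  have hPlt : P.1.2 < I n := by have := P.2; rwa [hPn] at this
  refine ⟨⟨?_, fun m => ?_⟩, lt_not_lexLe hvlt (by rw [hvn]; exact hPlt)⟩
  · rw [hvlt 0 hn]; exact hI.1
  · obtain ⟨k, i, hki⟩ : ∃ k i, concSt J m = (k, i) := ⟨_, _, rfl⟩
    have hile : i ≤ J k := by have := concSt_le J m; rwa [hki] at this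
    rcases Nat.eq_zero_or_pos i with hi0 | hi0
    · subst hi0
      have hag : ∀ N, (∀ q < N, x (k + q) = P) → (∀ q < N, x q = P) →
          concSt J (m + N * (n + 1)) = (k + N, 0) ∧ concSt J (N * (n + 1)) = (N, 0) ∧
          ∀ t < N * (n + 1), v (m + t) = v t := by
        intro N
        induction N with
        | zero => intro _ _; simpa using ⟨hki, hst0⟩
        | succ N ih =>
          intro h1 h2
          obtain ⟨i1, i2, i3⟩ := ih (fun q hq => h1 q (by omega)) (fun q hq => h2 q (by omega))
          have e1 : J (k + N) = n := by simp only [hJ, h1 N (by omega)]; exact hPn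
          have e2 : J N = n := by simp only [hJ, h2 N (by omega)]; exact hPn
          have a1 : A (k + N) = A N := by simp only [hA, h1 N (by omega), h2 N (by omega)]
          have n1 := concSt_next J _ _ i1
          have n2 := concSt_next J _ _ i2
          rw [e1] at n1
          rw [e2] at n2
          refine ⟨by rw [Nat.succ_mul, ← add_assoc m, n1, add_assoc], by rw [Nat.succ_mul, n2],
            fun t ht => ?_⟩
          rcases Nat.lt_or_ge t (N * (n + 1)) with h | h
          · exact i3 t h
          · obtain ⟨u, rfl⟩ := Nat.exists_eq_add_of_le h
            rw [Nat.succ_mul] at ht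
            have v1 := hval _ _ _ u i1 (by omega)
            have v2 := hval _ _ _ u i2 (by omega)
            rw [← add_assoc, v1, v2, e1, e2, a1]
      rcases hx with hx | ⟨K, hK1, hK2⟩
      · left
        funext t
        rw [shift_iter]
        refine (hag (t + 1) (fun q _ => hx _) (fun q _ => hx _)).2.2 t ?_
        nlinarith
      · rcases Nat.eq_zero_or_pos k with hk0 | hk0
        · left
          have : m = 0 := by
            cases m with
            | zero => rfl
            | succ m =>
              rw [concSt] at hki
              split_ifs at hki <;> simp [Prod.ext_iff] at hki
              omega
          subst this
          rfl
        · classical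
          have hex : ∃ q, x (k + q) ≠ P := by
            obtain ⟨q, _, hq⟩ := hK2 k hk0
            exact ⟨q, hq⟩
          have hfs := Nat.find_spec hex
          have hfm : ∀ q < Nat.find hex, x (k + q) = P := fun q hq => by
            have := Nat.find_min hex hq
            push Not at this
            exact this
          have hfK : Nat.find hex < K := by
            obtain ⟨q, hq, hq'⟩ := hK2 k hk0
            exact lt_of_le_of_lt (Nat.find_min' hex hq') hq
          set N := Nat.find hex
          obtain ⟨i1, i2, i3⟩ := hag N hfm (fun q hq => hK1 q (by omega))
          have e2 : J N = n := by simp only [hJ, hK1 N hfK]; exact hPn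
          have a2 : A N = P.1.2 := by simp only [hA, hK1 N hfK]
          have hj := hJle (k + N)
          right
          refine ⟨N * (n + 1) + J (k + N), fun t ht => ?_, ?_⟩
          · rw [shift_iter]
            rcases Nat.lt_or_ge t (N * (n + 1)) with h | h
            · exact i3 t h
            · obtain ⟨u, rfl⟩ := Nat.exists_eq_add_of_le h
              have v1 := hval _ _ _ u i1 (by omega)
              have v2 := hval _ _ _ u i2 (by omega)
              rw [← add_assoc, v1, v2, blkLetter, blkLetter, if_pos (by omega), if_pos (by omega)]
          · rw [shift_iter]
            have v1 := hval _ _ _ (J (k + N)) i1 (by omega)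
            have v2 := hval _ _ _ (J (k + N)) i2 (by omega)
            rw [← add_assoc, v1, v2, blkLetter, blkLetter, if_neg (by omega)]
            split_ifs with h
            · simpa using hAlt (k + N)
            · have hjn : J (k + N) = n := by omega
              have h1 := hAlt (k + N)
              rw [hjn] at h1
              rw [a2]
              refine lt_of_le_of_ne (hPc _ h1) fun hc => hfs ?_
              apply Subtype.ext
              apply Prod.ext
              · apply Fin.ext
                rw [hPn]; exact hjn
              · exact hc
    · right
      obtain ⟨u, hu⟩ := Nat.exists_eq_add_of_le hile
      have hjn := hJle k
      have hv1 : ∀ t < u, v (m + t) = I (i + t) := fun t ht => by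
        rw [hval m k i t hki (by omega), blkLetter, if_pos (by omega)]
      have hv2 : v (m + u) = A k := by
        rw [hval m k i u hki (by omega), blkLetter, if_neg (by omega)]
      have hAu : A k < I (i + u) := by have := hAlt k; rwa [hu] at this
      have key : (∃ d < u, (∀ t < d, I (i + t) = I t) ∧ I (i + d) < I d) ∨
          ((∀ t < u, I (i + t) = I t) ∧ I (i + u) ≤ I u) := by
        rcases hI.2 i with h | ⟨d, hd1, hd2⟩
        · have h' : ∀ t, I (i + t) = I t := fun t => by
            rw [← shift_iter I i t, h]
          exact Or.inr ⟨fun t _ => h' t, (h' u).le⟩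
        · simp only [shift_iter] at hd1 hd2
          rcases lt_trichotomy d u with h | h | h
          · exact Or.inl ⟨d, h, hd1, hd2⟩
          · subst h; exact Or.inr ⟨hd1, hd2.le⟩
          · exact Or.inr ⟨fun t ht => hd1 t (by omega), (hd1 u h).le⟩
      rcases key with ⟨d, hd, hd1, hd2⟩ | ⟨h1, h2⟩
      · refine ⟨d, fun t ht => ?_, ?_⟩
        · rw [shift_iter, hv1 t (by omega), hvlt t (by omega), hd1 t ht]
        · rw [shift_iter, hv1 d hd, hvlt d (by omega)]; exact hd2
      · refine ⟨u, fun t ht => ?_, ?_⟩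
        · rw [shift_iter, hv1 t ht, hvlt t (by omega), h1 t ht]
        · rw [shift_iter, hv2, hvlt u (by omega)]; exact lt_of_lt_of_le hAu h2

/-- If `X` is a compact shift-invariant subset of `Σ⁺` with
`α ∈ DF_MZ(X)`, then some element of `X` is lexicographically at least `I(α)`. -/
theorem stmt15 (α : Fin 3 → ℝ) (hα : α ∈ Delta') (Iα : Seq3) (hI : IsInfimax α Iα)
    (X : Set Seq3) (hXc : IsCompact X) (hXinv : Set.MapsTo shift X X)
    (hαX : α ∈ DFMZ X) :
    ∃ s ∈ X, lexLe Iα s := by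
  by_contra hcon
  push Not at hcon
  have hXne : X.Nonempty := by
    obtain ⟨s, _, hs, _⟩ := hαX
    exact ⟨s 0, hs 0⟩
  obtain ⟨n, hIn, hX⟩ := compact_aux Iα X hXc hXne (fun s hs => not_lexLe (hcon s hs))
  obtain ⟨-, hIM, hlow, -⟩ := hI
  rcases Nat.eq_zero_or_pos n with hn | hn
  · subst hn
    have h0 : ∀ s ∈ X, s 0 ≠ 2 := by
      intro s hs h
      obtain ⟨j, hj, _, hlt⟩ := hX s hs
      obtain rfl : j = 0 := by omega
      rw [h, hIM.1] at hlt
      exact lt_irrefl _ hlt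
    obtain ⟨s, r, hs, hr, hlim⟩ := hαX
    have h2 := (tendsto_pi_nhds.1 hlim) 2
    have h3 : ∀ i, ((r i : ℝ)⁻¹ • birk (s i) (r i)) 2 = 0 := by
      intro i
      have : birk (s i) (r i) 2 = 0 := by
        rw [birk, Finset.sum_apply]
        refine Finset.sum_eq_zero fun q _ => ?_
        rw [kappa, if_neg]
        exact fun h => h0 _ (hXinv.iterate q (hs i)) h.symm
      simp [this]
    simp only [h3] at h2
    have := tendsto_nhds_unique h2 tendsto_const_nhds
    exact absurd hα.2 (by rw [this]; exact lt_irrefl _)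
  · obtain ⟨f, hf1, hf0, hfg⟩ := hull_aux α Iα n X hXinv hX hαX
    have hcex : ∃ c : Fin 3, c < Iα n ∧ ∀ a, a < Iα n → a ≤ c := by
      generalize Iα n = z at hIn
      revert z
      decide
    obtain ⟨c, hc, hc'⟩ := hcex
    let P : Blk Iα n := ⟨(⟨n, by omega⟩, c), hc⟩
    obtain ⟨x, hx0, ⟨C, hC⟩, hx⟩ := blockseq_aux P (gw α Iα n) f hf1 hf0 hfg
    obtain ⟨hv, hnv⟩ := conc_max Iα hIM n hn P rfl hc' x hx0 hx
    refine hnv (hlow _ ⟨hv, ?_⟩)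
    obtain ⟨H, hH0, hH⟩ := wt_bound α
    refine freq_aux α _ (C + n * H) fun r => ?_
    rw [conc_sum]
    refine (norm_add_le _ _).trans (add_le_add (hC _) ?_)
    refine (wt_sum_bound α H hH Iα _).trans ?_
    apply mul_le_mul_of_nonneg_right _ hH0
    have h1 := concSt_le (fun k => ((x k).1.1 : ℕ)) r
    have h2 := Nat.lt_succ_iff.1 (x (concSt (fun k => ((x k).1.1 : ℕ)) r).1).1.1.2
    exact_mod_cast h1.trans h2
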